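/- The feedback consumption rate ĉ(x) := (v'(x))^{−1/γ} / x converges at infinity: lim_{x→∞} ĉ(x) = β/γ + (1−γ)( μ/γ + σ²/2 ). -/

import Mathlib

open Set Filter Topology

/-- Approximate maximum principle at infinity. -/
lemma approx_max (w w1 w2 : ℝ → ℝ) (K M T0 : ℝ)
    (h1 : ∀ t, HasDerivAt w (w1 t) t) (h2 : ∀ t, HasDerivAt w1 (w2 t) t)
    (hM : ∀ t ≥ T0, w t ≤ M)
    (H : ∀ ε > 0, ∃ δ > 0, ∃ T, ∀ t ≥ T, K + ε ≤ w t → |w1 t| ≤ δ → w2 t ≤ δ → False) :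
    ∀ ε > 0, ∀ᶠ t in atTop, w t ≤ K + ε := by
  intro ε hε
  by_contra hcon
  have hfr : ∃ᶠ t in atTop, K + ε ≤ w t := by
    have : ∃ᶠ t in atTop, ¬ (w t ≤ K + ε) := not_eventually.mp hcon
    exact this.mono fun t ht => (not_le.mp ht).le
  have hbdd : IsBoundedUnder (· ≤ ·) atTop w :=
    ⟨M, by simpa using (eventually_ge_atTop T0).mono fun t ht => hM t ht⟩
  have hcob : IsCoboundedUnder (· ≤ ·) atTop w := IsCoboundedUnder.of_frequently_ge hfr
  have hL : K + ε ≤ limsup w atTop := le_limsup_of_frequently_le hfr hbdd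
  set L := limsup w atTop with hLdef
  obtain ⟨δ, hδ, T, hT⟩ := H (ε / 2) (by positivity)
  set η := min (δ / 8) (ε / 2) with hη
  have hη0 : 0 < η := by positivity
  have hηδ : η ≤ δ / 8 := min_le_left _ _
  have hηε : η ≤ ε / 2 := min_le_right _ _
  have hup : ∀ᶠ t in atTop, w t < L + η := eventually_lt_of_limsup_lt (by linarith) hbdd
  have hlo : ∃ᶠ t in atTop, L - η < w t := frequently_lt_of_lt_limsup hcob (by linarith)
  obtain ⟨T1, hT1⟩ := eventually_atTop.mp hup
  obtain ⟨t0, ht0, ht0T⟩ := (hlo.and_eventually (eventually_ge_atTop (max T T1 + 1))).exists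
  have hTm := le_max_left T T1
  have hTm1 := le_max_right T T1
  set g : ℝ → ℝ := fun t => w t - δ / 2 * (t - t0) ^ 2 with hg
  set g1 : ℝ → ℝ := fun t => w1 t - δ * (t - t0) with hg1
  have dg : ∀ t, HasDerivAt g (g1 t) t := by
    intro t
    have := (h1 t).sub ((((hasDerivAt_id t).sub_const t0).pow 2).const_mul (δ / 2))
    refine this.congr_deriv ?_
    simp [hg1]; ring
  have dg1 : ∀ t, HasDerivAt g1 (w2 t - δ) t := by
    intro t
    have := (h2 t).sub (((hasDerivAt_id t).sub_const t0).const_mul δ)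
    refine this.congr_deriv ?_
    simp
  have gc : Continuous g := continuous_iff_continuousAt.mpr fun t => (dg t).continuousAt
  obtain ⟨s, hs, hmax⟩ := (isCompact_Icc (a := t0 - 1) (b := t0 + 1)).exists_isMaxOn
    ⟨t0, by constructor <;> linarith⟩ gc.continuousOn
  have hgs : w t0 ≤ g s := by
    have := hmax (show t0 ∈ Icc (t0 - 1) (t0 + 1) by constructor <;> linarith)
    simpa [hg] using this
  have hsup := hT1 s (by linarith [hs.1])
  have hgs' : g s = w s - δ / 2 * (s - t0) ^ 2 := rfl
  have hs1 : t0 - 1 < s := by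
    rcases lt_or_eq_of_le hs.1 with h | h
    · exact h
    · exfalso; rw [hgs', ← h] at hgs; rw [← h] at hsup; nlinarith
  have hs2 : s < t0 + 1 := by
    rcases lt_or_eq_of_le hs.2 with h | h
    · exact h
    · exfalso; rw [hgs', h] at hgs; rw [h] at hsup; nlinarith
  have hloc : IsLocalMax g s := hmax.isLocalMax (Icc_mem_nhds hs1 hs2)
  have hg10 : g1 s = 0 := hloc.hasDerivAt_eq_zero (dg s)
  have hw1 : w1 s = δ * (s - t0) := by simp only [hg1] at hg10; linarith
  refine hT s (by linarith) ?_ ?_ ?_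
  · have : 0 ≤ δ / 2 * (s - t0) ^ 2 := by positivity
    linarith
  · rw [hw1, abs_le]; constructor <;> nlinarith
  · by_contra hw2
    have hd : deriv g = g1 := funext fun t => (dg t).deriv
    have hmin : IsLocalMin g s := by
      apply isLocalMin_of_deriv_deriv_pos
      · rw [hd, (dg1 s).deriv]; linarith
      · rw [hd, hg10]
      · exact gc.continuousAt
    have hconst : g =ᶠ[𝓝 s] fun _ => g s := by
      filter_upwards [hloc, hmin] with t a b using le_antisymm a b
    have h3 : deriv g =ᶠ[𝓝 s] deriv fun _ => g s := hconst.deriv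
    have h4 := h3.deriv_eq
    rw [hd, (dg1 s).deriv] at h4
    simp at h4
    linarith

/-- Monotone density: asymptotics of a concave function pass to the derivative. -/
lemma mono_density (v v' : ℝ → ℝ) (γ K : ℝ)
    (hv : ∀ x > (0 : ℝ), HasDerivAt v (v' x) x) (hconc : ConcaveOn ℝ (Ioi 0) v)
    (hK : Tendsto (fun x => v x * x ^ (-(1 - γ))) atTop (𝓝 K)) :
    Tendsto (fun x => v' x * x ^ γ) atTop (𝓝 ((1 - γ) * K)) := by
  have hslope : Tendsto (fun l : ℝ => K * ((l ^ (1 - γ) - 1) / (l - 1))) (𝓝[≠] 1)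
      (𝓝 ((1 - γ) * K)) := by
    have h := (Real.hasDerivAt_rpow_const (x := 1) (p := 1 - γ) (Or.inl one_ne_zero))
    have h2 := (hasDerivAt_iff_tendsto_slope.mp h).const_mul K
    simp only [Real.one_rpow, mul_one] at h2
    rw [mul_comm K] at h2
    refine h2.congr fun l => ?_
    rw [slope_def_field]; simp
  have hq : ∀ l > (0 : ℝ), Tendsto
      (fun x => (l ^ (1 - γ) * (v (l * x) * (l * x) ^ (-(1 - γ))) - v x * x ^ (-(1 - γ))) / (l - 1))
      atTop (𝓝 (K * ((l ^ (1 - γ) - 1) / (l - 1)))) := by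
    intro l hl
    have h1 : Tendsto (fun x => v (l * x) * (l * x) ^ (-(1 - γ))) atTop (𝓝 K) :=
      hK.comp (tendsto_id.const_mul_atTop hl)
    have := ((h1.const_mul (l ^ (1 - γ))).sub hK).div_const (l - 1)
    convert this using 2
    ring
  have heq : ∀ l > (0 : ℝ), ∀ x > (0 : ℝ),
      (l ^ (1 - γ) * (v (l * x) * (l * x) ^ (-(1 - γ))) - v x * x ^ (-(1 - γ))) / (l - 1)
       = (v (l * x) - v x) / (l * x - x) * x ^ γ := by
    intro l hl x hx
    have e1 : (l * x) ^ (-(1 - γ)) = (l ^ (1 - γ))⁻¹ * x ^ (-(1 - γ)) := by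
      rw [Real.mul_rpow hl.le hx.le, Real.rpow_neg hl.le]
    have e2 : x ^ (-(1 - γ)) = x ^ γ / x := by
      rw [show -(1 - γ) = γ - 1 by ring, Real.rpow_sub_one hx.ne']
    have hl' : l ^ (1 - γ) ≠ 0 := (Real.rpow_pos_of_pos hl _).ne'
    rw [e1, e2, show l * x - x = (l - 1) * x by ring]
    by_cases hl1 : l - 1 = 0
    · simp [hl1]
    · field_simp
  rw [tendsto_order]
  constructor
  · intro a ha
    have h1 := (hslope.mono_left (nhdsWithin_mono 1 (fun y (hy : y ∈ Ioi (1:ℝ)) => ne_of_gt hy)))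
    obtain ⟨l, hl, hl1⟩ := ((h1.eventually (lt_mem_nhds ha)).and self_mem_nhdsWithin).exists
    have hl1 : 1 < l := hl1
    filter_upwards [(hq l (by linarith)).eventually (lt_mem_nhds hl), eventually_gt_atTop 0]
      with x hx hx0
    rw [heq l (by linarith) x hx0] at hx
    refine hx.trans_le ?_
    have hxl : x < l * x := by nlinarith
    have := hconc.slope_le_of_hasDerivAt (x := x) (y := l * x) hx0 (show 0 < l * x by linarith)
      hxl (hv x hx0)
    rw [slope_def_field] at this
    have hp : 0 ≤ x ^ γ := Real.rpow_nonneg hx0.le _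
    gcongr
  · intro a ha
    have h1 := (hslope.mono_left (nhdsWithin_mono 1 (fun y (hy : y ∈ Iio (1:ℝ)) => ne_of_lt hy)))
    have h01 : ∀ᶠ l in 𝓝[<] (1:ℝ), 0 < l := nhdsWithin_le_nhds (lt_mem_nhds one_pos)
    obtain ⟨l, ⟨hl, hl1⟩, hl0⟩ :=
      (((h1.eventually (gt_mem_nhds ha)).and self_mem_nhdsWithin).and h01).exists
    have hl1 : l < 1 := hl1
    filter_upwards [(hq l hl0).eventually (gt_mem_nhds hl), eventually_gt_atTop 0]
      with x hx hx0
    rw [heq l hl0 x hx0] at hx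
    refine lt_of_le_of_lt ?_ hx
    have hxl : l * x < x := by nlinarith
    have := hconc.le_slope_of_hasDerivAt (x := l * x) (y := x) (show 0 < l * x by positivity) hx0
      hxl (hv x hx0)
    rw [slope_comm, slope_def_field] at this
    have hp : 0 ≤ x ^ γ := Real.rpow_nonneg hx0.le _
    gcongr

/-- A concave `C²` function has nonpositive second derivative. -/
lemma concave_second (v v' v'' : ℝ → ℝ)
    (hv : ∀ x > (0 : ℝ), HasDerivAt v (v' x) x) (hv2 : ∀ x > (0 : ℝ), HasDerivAt v' (v'' x) x)
    (hconc : ConcaveOn ℝ (Ioi 0) v) : ∀ x > (0 : ℝ), v'' x ≤ 0 := by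
  intro x hx
  have hanti : ∀ y, x < y → v' y ≤ v' x := fun y hxy =>
    (hconc.le_slope_of_hasDerivAt (x := x) (y := y) hx (show 0 < y from lt_trans hx hxy) hxy
      (hv y (lt_trans hx hxy))).trans
    (hconc.slope_le_of_hasDerivAt (x := x) (y := y) hx (show 0 < y from lt_trans hx hxy) hxy
      (hv x hx))
  have h := (hasDerivAt_iff_tendsto_slope.mp (hv2 x hx)).mono_left
    (nhdsWithin_mono x (fun y (hy : y ∈ Ioi x) => ne_of_gt hy))
  refine le_of_tendsto h ?_
  filter_upwards [self_mem_nhdsWithin] with y hy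
  have hy : x < y := hy
  rw [slope_def_field]
  exact div_nonpos_of_nonpos_of_nonneg (by linarith [hanti y hy]) (by linarith)

/-- Integrating the differential inequality gives the growth bound. -/
lemma growth_bound (v v' : ℝ → ℝ) (γ β X : ℝ) (hγ0 : 0 < γ) (hγ1 : γ < 1) (hβ : 0 < β) (hX : 0 < X)
    (hv : ∀ x > (0 : ℝ), HasDerivAt v (v' x) x) (hvpos : ∀ x > (0 : ℝ), 0 < v x)
    (hv'pos : ∀ x > (0 : ℝ), 0 < v' x)
    (hin : ∀ x ≥ X, β * v x ≤ (γ / (1 - γ)) * (v' x) ^ ((γ - 1) / γ)) :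
    ∃ M, ∀ x ≥ X, v x * x ^ (-(1 - γ)) ≤ M := by
  have hg : 0 < 1 - γ := by linarith
  set k := γ / (1 - γ) with hk
  have hk0 : 0 < k := by positivity
  have hbd : ∀ x ≥ X, v x ^ k * v' x ≤ (k / β) ^ k := by
    intro x hx
    have hx0 : 0 < x := lt_of_lt_of_le hX hx
    have h1 : v x ≤ (k / β) * (v' x) ^ ((γ - 1) / γ) := by
      have := hin x hx
      rw [div_mul_eq_mul_div, le_div_iff₀ hβ]; linarith
    have h2 := Real.rpow_le_rpow (hvpos x hx0).le h1 hk0.le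
    rw [Real.mul_rpow (by positivity) (Real.rpow_nonneg (hv'pos x hx0).le _),
      ← Real.rpow_mul (hv'pos x hx0).le,
      show (γ - 1) / γ * k = -1 by rw [hk]; field_simp; ring, Real.rpow_neg_one] at h2
    have hp := hv'pos x hx0
    calc v x ^ k * v' x ≤ ((k / β) ^ k * (v' x)⁻¹) * v' x := by gcongr
      _ = _ := by field_simp
  set r := 1 / (1 - γ) with hr
  set B := r * (k / β) ^ k with hB
  have hr0 : 0 < r := by positivity
  have hB0 : 0 < B := by positivity
  have hd : ∀ x > (0 : ℝ), HasDerivAt (fun x => v x ^ r - B * x) (r * (v x ^ k * v' x) - B) x := by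
    intro x hx
    have := ((hv x hx).rpow_const (p := r) (Or.inl (hvpos x hx).ne')).sub
      ((hasDerivAt_id x).const_mul B)
    refine this.congr_deriv ?_
    rw [show r - 1 = k by rw [hr, hk]; field_simp; ring]
    ring
  have hanti : AntitoneOn (fun x => v x ^ r - B * x) (Ici X) := by
    apply antitoneOn_of_deriv_nonpos (convex_Ici X)
    · intro x hx
      exact (hd x (lt_of_lt_of_le hX hx)).continuousAt.continuousWithinAt
    · intro x hx
      rw [interior_Ici] at hx
      exact (hd x (lt_trans hX hx)).differentiableAt.differentiableWithinAt
    · intro x hx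
      rw [interior_Ici] at hx
      have hx : X < x := hx
      rw [(hd x (lt_trans hX hx)).deriv, hB]
      have := mul_le_mul_of_nonneg_left (hbd x hx.le) hr0.le
      linarith
  set A := v X ^ r with hA
  have hA0 : 0 < A := Real.rpow_pos_of_pos (hvpos X hX) _
  refine ⟨(A / X + B) ^ (1 - γ), fun x hx => ?_⟩
  have hx0 : 0 < x := lt_of_lt_of_le hX hx
  have h1 : v x ^ r ≤ (A / X + B) * x := by
    have h : v x ^ r - B * x ≤ v X ^ r - B * X := hanti (mem_Ici.2 le_rfl) (mem_Ici.2 hx) hx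
    have h2 : A ≤ A / X * x := by
      rw [div_mul_eq_mul_div, le_div_iff₀ hX]; gcongr
    nlinarith [mul_pos hB0 hX]
  have h2 := Real.rpow_le_rpow (Real.rpow_nonneg (hvpos x hx0).le _) h1 hg.le
  rw [← Real.rpow_mul (hvpos x hx0).le, show r * (1 - γ) = 1 by rw [hr]; field_simp,
    Real.rpow_one, Real.mul_rpow (by positivity) hx0.le] at h2
  rw [Real.rpow_neg hx0.le, ← div_eq_mul_inv, div_le_iff₀ (Real.rpow_pos_of_pos hx0 _)]
  exact h2

set_option maxHeartbeats 1600000 in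



/-- The feedback consumption rate `ĉ(x) = (v'(x))^(−1/γ)/x` converges at infinity to
`β/γ + (1−γ)(μ/γ + σ²/2)`. -/
theorem isoelastic_feedback_consumption_limit_at_infinity
    (α γ μ σ β : ℝ) (hα0 : 0 < α) (hα1 : α < 1) (hγ0 : 0 < γ) (hγ1 : γ < 1)
    (hμ : 0 < μ) (hσ : 0 < σ) (hβ : 0 < β)
    (v v' v'' : ℝ → ℝ)
    (hv'deriv : ∀ x > (0 : ℝ), HasDerivAt v (v' x) x)
    (hv''deriv : ∀ x > (0 : ℝ), HasDerivAt v' (v'' x) x)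
    (hv''cont : ContinuousOn v'' (Ioi 0))
    (hvnonneg : ∀ x > (0 : ℝ), 0 ≤ v x)
    (hconc : ConcaveOn ℝ (Ioi 0) v)
    (hv'pos : ∀ x > (0 : ℝ), 0 < v' x)
    (hHJB : ∀ x > (0 : ℝ), β * v x =
      (1 / 2) * σ ^ 2 * x ^ 2 * v'' x + (x ^ α - μ * x) * v' x
        + (γ / (1 - γ)) * (v' x) ^ ((γ - 1) / γ))
    (C₁ : ℝ) (hC₁ : 0 < C₁)
    (hlow : ∀ x > (0 : ℝ), C₁ * x ^ (1 - γ) ≤ v x) :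
    Tendsto (fun x => (v' x) ^ (-(1 / γ)) / x) atTop
      (𝓝 (β / γ + (1 - γ) * (μ / γ + σ ^ 2 / 2))) := by
  have hg : 0 < 1 - γ := by linarith
  set c := β / γ + (1 - γ) * (μ / γ + σ ^ 2 / 2) with hc
  have hc0 : 0 < c := by positivity
  set K := c ^ (-γ) / (1 - γ) with hK
  have hcg : 0 < c ^ (-γ) := Real.rpow_pos_of_pos hc0 _
  have hK0 : 0 < K := by positivity
  have hvpos : ∀ x > (0 : ℝ), 0 < v x := fun x hx =>
    lt_of_lt_of_le (mul_pos hC₁ (Real.rpow_pos_of_pos hx _)) (hlow x hx)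
  -- upper growth bound
  have hM : ∃ X > 0, ∃ M, ∀ x ≥ X, v x * x ^ (-(1 - γ)) ≤ M := by
    have hlim : Tendsto (fun x : ℝ => x ^ (-(1 - α))) atTop (𝓝 0) :=
      tendsto_rpow_neg_atTop (by linarith)
    obtain ⟨X, hX⟩ := eventually_atTop.mp (hlim.eventually (gt_mem_nhds hμ))
    refine ⟨max X 1, by positivity, growth_bound v v' γ β (max X 1) hγ0 hγ1 hβ (by positivity)
      hv'deriv hvpos hv'pos fun x hx => ?_⟩
    have hx0 : 0 < x := lt_of_lt_of_le one_pos ((le_max_right _ _).trans hx)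
    have h1 := hX x ((le_max_left _ _).trans hx)
    have h2 : x ^ α = x ^ (-(1 - α)) * x := by
      rw [← Real.rpow_add_one hx0.ne']; congr 1; ring
    have h3 : (x ^ α - μ * x) * v' x ≤ 0 := by
      rw [h2]
      have := hv'pos x hx0
      have h4 : x ^ (-(1 - α)) * x ≤ μ * x := by gcongr
      exact mul_nonpos_of_nonpos_of_nonneg (by linarith) this.le
    have h5 := concave_second v v' v'' hv'deriv hv''deriv hconc x hx0
    have h6 : (1 / 2) * σ ^ 2 * x ^ 2 * v'' x ≤ 0 :=
      mul_nonpos_of_nonneg_of_nonpos (by positivity) h5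
    linarith [hHJB x hx0]
  obtain ⟨X, hX0, M, hM⟩ := hM
  set w : ℝ → ℝ := fun t => v (Real.exp t) * Real.exp (-(1 - γ) * t) with hw
  set p : ℝ → ℝ := fun t => v' (Real.exp t) * Real.exp (γ * t) with hp
  set p1 : ℝ → ℝ := fun t => v'' (Real.exp t) * Real.exp ((1 + γ) * t) + γ * p t with hp1
  have hexp : ∀ a t : ℝ, HasDerivAt (fun t => Real.exp (a * t)) (Real.exp (a * t) * a) t := by
    intro a t
    simpa using ((hasDerivAt_id t).const_mul a).exp
  have dw : ∀ t, HasDerivAt w (p t - (1 - γ) * w t) t := by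
    intro t
    have := ((hv'deriv _ (Real.exp_pos t)).comp t (Real.hasDerivAt_exp t)).mul (hexp (-(1 - γ)) t)
    refine this.congr_deriv ?_
    have e : Real.exp (γ * t) = Real.exp t * Real.exp (-(1 - γ) * t) := by
      rw [← Real.exp_add]; congr 1; ring
    simp only [hw, hp, e, Function.comp]
    ring
  have dp : ∀ t, HasDerivAt p (p1 t) t := by
    intro t
    have := ((hv''deriv _ (Real.exp_pos t)).comp t (Real.hasDerivAt_exp t)).mul (hexp γ t)
    refine this.congr_deriv ?_
    have e : Real.exp ((1 + γ) * t) = Real.exp t * Real.exp (γ * t) := by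
      rw [← Real.exp_add]; congr 1; ring
    simp only [hp1, hp, e, Function.comp]
    ring
  have dw1 : ∀ t, HasDerivAt (fun t => p t - (1 - γ) * w t)
      (p1 t - (1 - γ) * (p t - (1 - γ) * w t)) t :=
    fun t => (dp t).sub ((dw t).const_mul _)
  have hppos : ∀ t, 0 < p t := fun t => mul_pos (hv'pos _ (Real.exp_pos t)) (Real.exp_pos _)
  have hwpos : ∀ t, 0 < w t := fun t => mul_pos (hvpos _ (Real.exp_pos t)) (Real.exp_pos _)
  set q : ℝ → ℝ := fun y => γ / (1 - γ) * y ^ ((γ - 1) / γ) with hq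
  set a := 1 / 2 * σ ^ 2 * γ + μ with ha
  have ha0 : 0 < a := by positivity
  have ode : ∀ t, β * w t + a * p t - q (p t)
      = 1 / 2 * σ ^ 2 * p1 t + Real.exp (-(1 - α) * t) * p t := by
    intro t
    have h := hHJB _ (Real.exp_pos t)
    have e1 : (p t) ^ ((γ - 1) / γ) = v' (Real.exp t) ^ ((γ - 1) / γ) * Real.exp (-(1 - γ) * t) := by
      simp only [hp]
      rw [Real.mul_rpow (hv'pos _ (Real.exp_pos t)).le (Real.exp_pos _).le, ← Real.exp_mul]
      congr 2; field_simp; ring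
    have e2 : Real.exp t ^ α = Real.exp (-(1 - α) * t) * Real.exp t := by
      rw [← Real.exp_mul, ← Real.exp_add]; congr 1; ring
    have e3 : Real.exp ((1 + γ) * t) = Real.exp t ^ 2 * Real.exp (-(1 - γ) * t) := by
      rw [sq, ← Real.exp_add, ← Real.exp_add]; congr 1; ring
    have e4 : Real.exp (γ * t) = Real.exp t * Real.exp (-(1 - γ) * t) := by
      rw [← Real.exp_add]; congr 1; ring
    rw [e2] at h
    simp only [hq, e1]
    simp only [hp1, hw, hp, e3, e4, ha]
    linear_combination Real.exp (-(1 - γ) * t) * h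
  have qanti : ∀ y z, 0 < y → y ≤ z → q z ≤ q y := by
    intro y z hy hyz
    simp only [hq]
    have : z ^ ((γ - 1) / γ) ≤ y ^ ((γ - 1) / γ) :=
      Real.rpow_le_rpow_of_nonpos hy hyz (div_nonpos_of_nonpos_of_nonneg (by linarith) hγ0.le)
    gcongr
  have qK : β * K + a * ((1 - γ) * K) - q ((1 - γ) * K) = 0 := by
    have e1 : (1 - γ) * K = c ^ (-γ) := by rw [hK]; field_simp
    have e2 : (c ^ (-γ)) ^ ((γ - 1) / γ) = c * c ^ (-γ) := by
      rw [← Real.rpow_mul hc0.le, mul_comm c, ← Real.rpow_add_one hc0.ne']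
      congr 1; field_simp; ring
    simp only [hq, e1, e2]
    rw [hK, ha]
    have e3 : c * γ = β + (1 - γ) * (μ + σ ^ 2 / 2 * γ) := by rw [hc]; field_simp
    field_simp
    linear_combination (-2 * c ^ (-γ)) * e3
  have qcont : ∀ y > 0, ContinuousAt q y := fun y hy =>
    continuousAt_const.mul (Real.continuousAt_rpow_const y _ (Or.inl hy.ne'))
  have hlimexp : Tendsto (fun t : ℝ => Real.exp (-(1 - α) * t)) atTop (𝓝 0) := by
    refine Real.tendsto_exp_atBot.comp ?_
    exact tendsto_id.const_mul_atTop_of_neg (by linarith)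
  have hexpT : ∃ T0, ∀ t ≥ T0, X ≤ Real.exp t :=
    eventually_atTop.mp (Real.tendsto_exp_atTop.eventually (eventually_ge_atTop X))
  obtain ⟨T0, hT0⟩ := hexpT
  have hwW : ∀ t, w t = v (Real.exp t) * Real.exp t ^ (-(1 - γ)) := by
    intro t; simp only [hw]; rw [← Real.exp_mul]; congr 2; ring
  have hwM : ∀ t ≥ T0, w t ≤ M := fun t ht => by rw [hwW]; exact hM _ (hT0 t ht)
  clear_value w p p1 q a
  have upper : ∀ ε > 0, ∀ᶠ t in atTop, w t ≤ K + ε := by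
    refine approx_max w _ _ K M T0 dw dw1 hwM fun ε hε => ?_
    set y0 := (1 - γ) * (K + ε) with hy0
    have hy0pos : 0 < y0 := by positivity
    have hF : ContinuousAt (fun δ => β * (K + ε) + a * (y0 - δ) - q (y0 - δ)
        - σ ^ 2 * δ - δ * (M + δ)) 0 := by
      have h0 : ContinuousAt (fun δ => q (y0 - δ)) 0 := by
        apply ContinuousAt.comp (g := q) (f := fun δ => y0 - δ)
        · simpa using qcont y0 hy0pos
        · fun_prop
      have h3 : ContinuousAt (fun δ : ℝ => β * (K + ε) + a * (y0 - δ)) 0 := by fun_prop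
      have h4 : ContinuousAt (fun δ : ℝ => σ ^ 2 * δ) 0 := by fun_prop
      have h5 : ContinuousAt (fun δ : ℝ => δ * (M + δ)) 0 := by fun_prop
      exact ((h3.sub h0).sub h4).sub h5
    have hFpos : 0 < β * (K + ε) + a * (y0 - 0) - q (y0 - 0) - σ ^ 2 * 0 - 0 * (M + 0) := by
      have h1 := qanti ((1 - γ) * K) y0 (by positivity) (by rw [hy0]; nlinarith)
      have h2 : a * ((1 - γ) * K) ≤ a * y0 := by rw [hy0]; gcongr; linarith
      simp only [sub_zero, mul_zero, zero_mul]
      nlinarith [mul_pos hβ hε]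
    have hev : ∀ᶠ δ in 𝓝[>] (0:ℝ), 0 < β * (K + ε) + a * (y0 - δ) - q (y0 - δ)
        - σ ^ 2 * δ - δ * (M + δ) := nhdsWithin_le_nhds (hF.eventually (lt_mem_nhds hFpos))
    have hev2 : ∀ᶠ δ in 𝓝[>] (0:ℝ), δ < y0 := nhdsWithin_le_nhds (gt_mem_nhds hy0pos)
    obtain ⟨δ, ⟨hδF, hδy⟩, hδ⟩ := ((hev.and hev2).and self_mem_nhdsWithin).exists
    have hδ : 0 < δ := hδ
    obtain ⟨T, hT⟩ := eventually_atTop.mp (hlimexp.eventually (gt_mem_nhds hδ))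
    refine ⟨δ, hδ, max T T0, fun t ht hwt h1 h2 => ?_⟩
    have hE := hT t ((le_max_left _ _).trans ht)
    have hMt := hwM t ((le_max_right _ _).trans ht)
    obtain ⟨h1a, h1b⟩ := abs_le.mp h1
    have hpt := hppos t
    have hplo : y0 - δ ≤ p t := by
      have : y0 ≤ (1 - γ) * w t := by rw [hy0]; gcongr
      linarith
    have hphi : p t ≤ M + δ := by linarith [mul_pos hγ0 (hwpos t)]
    have hq1 := qanti _ _ (by linarith) hplo
    have ha1 : a * (y0 - δ) ≤ a * p t := by gcongr
    have hb1 : β * (K + ε) ≤ β * w t := by gcongr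
    have hp1t : p1 t ≤ 2 * δ := by
      have := mul_le_mul_of_nonneg_left h1b hg.le
      linarith [mul_pos hγ0 hδ]
    have hs1 : 1 / 2 * σ ^ 2 * p1 t ≤ 1 / 2 * σ ^ 2 * (2 * δ) := by gcongr
    have he1 : Real.exp (-(1 - α) * t) * p t ≤ δ * (M + δ) := by gcongr
    linarith [ode t]
  have lower : ∀ ε > 0, ∀ᶠ t in atTop, -w t ≤ -K + ε := by
    refine approx_max (fun t => -w t) _ _ (-K) 0 0 (fun t => (dw t).neg) (fun t => (dw1 t).neg)
      (fun t _ => by linarith [hwpos t]) fun ε hε => ?_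
    by_cases hKε : K - ε ≤ 0
    · exact ⟨1, one_pos, 0, fun t _ h _ _ => by linarith [hwpos t]⟩
    push Not at hKε
    set y0 := (1 - γ) * (K - ε) with hy0
    have hy0pos : 0 < y0 := by positivity
    have hF : ContinuousAt (fun δ => β * (K - ε) + a * (y0 + δ) - q (y0 + δ)
        + σ ^ 2 * δ) 0 := by
      have h0 : ContinuousAt (fun δ => q (y0 + δ)) 0 := by
        apply ContinuousAt.comp (g := q) (f := fun δ => y0 + δ)
        · simpa using qcont y0 hy0pos
        · fun_prop
      have h3 : ContinuousAt (fun δ : ℝ => β * (K - ε) + a * (y0 + δ)) 0 := by fun_prop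
      have h4 : ContinuousAt (fun δ : ℝ => σ ^ 2 * δ) 0 := by fun_prop
      exact (h3.sub h0).add h4
    have hFneg : β * (K - ε) + a * (y0 + 0) - q (y0 + 0) + σ ^ 2 * 0 < 0 := by
      have h1 := qanti y0 ((1 - γ) * K) (by positivity) (by rw [hy0]; nlinarith)
      have h2 : a * y0 ≤ a * ((1 - γ) * K) := by rw [hy0]; gcongr; linarith
      simp only [add_zero, mul_zero]
      nlinarith [mul_pos hβ hε]
    have hev : ∀ᶠ δ in 𝓝[>] (0:ℝ), β * (K - ε) + a * (y0 + δ) - q (y0 + δ)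
        + σ ^ 2 * δ < 0 := nhdsWithin_le_nhds (hF.eventually (gt_mem_nhds hFneg))
    obtain ⟨δ, hδF, hδ⟩ := (hev.and self_mem_nhdsWithin).exists
    have hδ : 0 < δ := hδ
    refine ⟨δ, hδ, 0, fun t _ hwt h1 h2 => ?_⟩
    obtain ⟨h1a, h1b⟩ := abs_le.mp h1
    have hpt := hppos t
    have hwt' : w t ≤ K - ε := by linarith
    have hphi : p t ≤ y0 + δ := by
      have : (1 - γ) * w t ≤ y0 := by rw [hy0]; gcongr
      linarith
    have hq1 := qanti _ _ hpt hphi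
    have ha1 : a * p t ≤ a * (y0 + δ) := by gcongr
    have hb1 : β * w t ≤ β * (K - ε) := by gcongr
    have hp1t : -(2 * δ) ≤ p1 t := by
      have := mul_le_mul_of_nonneg_left h1b hg.le
      linarith [mul_pos hγ0 hδ]
    have hs1 : 1 / 2 * σ ^ 2 * (-(2 * δ)) ≤ 1 / 2 * σ ^ 2 * p1 t := by gcongr
    have he1 : 0 < Real.exp (-(1 - α) * t) * p t := by positivity
    linarith [ode t]
  have wlim : Tendsto w atTop (𝓝 K) := by
    rw [tendsto_order]
    constructor
    · intro b hb
      filter_upwards [lower ((K - b) / 2) (by linarith)] with t ht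
      linarith
    · intro b hb
      filter_upwards [upper ((b - K) / 2) (by linarith)] with t ht
      linarith
  have Wlim : Tendsto (fun x => v x * x ^ (-(1 - γ))) atTop (𝓝 K) := by
    refine (wlim.comp Real.tendsto_log_atTop).congr' ?_
    filter_upwards [eventually_gt_atTop 0] with x hx
    simp only [Function.comp]
    rw [hwW, Real.exp_log hx]
  have plim := mono_density v v' γ K hv'deriv hconc Wlim
  have e1 : (1 - γ) * K = c ^ (-γ) := by rw [hK]; field_simp
  rw [e1] at plim
  have hfin := plim.rpow_const (p := -(1 / γ)) (Or.inl hcg.ne')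
  rw [← Real.rpow_mul hc0.le, show -γ * -(1 / γ) = 1 by field_simp, Real.rpow_one] at hfin
  refine hfin.congr' ?_
  filter_upwards [eventually_gt_atTop 0] with x hx
  rw [Real.mul_rpow (hv'pos x hx).le (Real.rpow_nonneg hx.le _), ← Real.rpow_mul hx.le,
    show γ * -(1 / γ) = -1 by field_simp, Real.rpow_neg_one, ← div_eq_mul_inv]
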